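/- Let k ≤ n < 2k. If k is even then x(Q_{n/k}) = n/k, and if k is odd then x(Q_{n/k}) = (n+1)/(k+1). -/

import Mathlib

/-!
Recording, for each vertex, the side of each cut on which it lies turns an `N/M`-cover of `G` into a
map from its vertices to `{0,1}^N` sending adjacent vertices to words at distance at least `M`, and
conversely. Adding a parity bit and deleting a bit show that for odd `k` the graphs `Q_{n/k}` and
`Q_{(n+1)/(k+1)}` have the same covers; thus `k` may be taken even.

For even `k` the identity code gives `n/k`. Conversely it suffices that a cut contains at most a
proportion `k/n` of the pairs at distance exactly `k`: averaging over these pairs then bounds every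
cover. In the Walsh basis the distance-`k` adjacency operator is diagonal with eigenvalues the
Krawtchouk numbers `K_k(j)`, and for `k` even and `k ≤ n < 2k` the least of them is
`K_k(1) = (n - 2k)/n * (n choose k)`, which yields exactly this proportion. The inequality
`K_k(1) ≤ K_k(j)` comes from the reflection `K_k(j) = ± K_{n-k}(j)` and from
`|K_t(j)| ≤ K_t(1)` for `2t < n`, an induction on `n` using Pascal-type recursions.
-/

attribute [local instance] Classical.propDecidable

/-- A cut in a graph: the set of edges leaving some vertex set `W`. -/
def IsCut {V : Type*} (G : SimpleGraph V) (X : Set (Sym2 V)) : Prop :=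
  ∃ W : Set V, X = {e | e ∈ G.edgeSet ∧ ∃ a b, e = s(a, b) ∧ a ∈ W ∧ b ∉ W}

/-- An `n/k`-cover: `n` cuts covering every edge at least `k` times. -/
def HasCover {V : Type*} (G : SimpleGraph V) (n k : ℕ) : Prop :=
  ∃ X : Fin n → Set (Sym2 V), (∀ i, IsCut G (X i)) ∧
    ∀ e ∈ G.edgeSet, k ≤ (Finset.univ.filter fun i => e ∈ X i).card

/-- The fractional cut-covering number `x(G)`. -/
noncomputable def cutCover {V : Type*} (G : SimpleGraph V) : ℝ :=
  sInf { q : ℝ | ∃ n k : ℕ, 0 < k ∧ q = n / k ∧ HasCover G n k }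

/-- The graph `Q_{n/k}` on `{0,1}^n`, with edges between vertices at Hamming distance `≥ k`. -/
def cubeGraph (n k : ℕ) : SimpleGraph (Fin n → Bool) :=
  SimpleGraph.fromRel (fun x y => k ≤ hammingDist x y)

section Krawtchouk

open Polynomial

theorem reflect_pow {R : Type*} [Semiring R] {p : R[X]} {d : ℕ} (hp : p.natDegree ≤ d)
    (n : ℕ) : reflect (n * d) (p ^ n) = reflect d p ^ n := by
  induction n with
  | zero => simp
  | succ n ih =>
    rw [pow_succ, add_one_mul, reflect_mul _ _ (natDegree_pow_le_of_le n hp) hp, ih, pow_succ]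

/-- The Krawtchouk number `K_t(j)` for words of length `j + m`, through its generating function
`(1 - X) ^ j * (1 + X) ^ m`. The parameter `m` replaces the length so that the recursions involve
no subtraction of natural numbers. -/
noncomputable def krawtchouk (j m t : ℕ) : ℤ :=
  ((1 - X) ^ j * (1 + X) ^ m : ℤ[X]).coeff t

@[simp]
theorem krawtchouk_zero_left (m t : ℕ) : krawtchouk 0 m t = m.choose t := by
  simp [krawtchouk, coeff_one_add_X_pow]

@[simp]
theorem krawtchouk_zero_right (j m : ℕ) : krawtchouk j m 0 = 1 := by
  simp [krawtchouk, coeff_zero_eq_eval_zero]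

theorem krawtchouk_succ_left (j m t : ℕ) :
    krawtchouk (j + 1) m (t + 1) = krawtchouk j m (t + 1) - krawtchouk j m t := by
  unfold krawtchouk
  rw [← coeff_mul_X (n := t), ← coeff_sub]
  congr 1
  ring

theorem krawtchouk_succ_middle (j m t : ℕ) :
    krawtchouk j (m + 1) (t + 1) = krawtchouk j m (t + 1) + krawtchouk j m t := by
  unfold krawtchouk
  rw [← coeff_mul_X (n := t), ← coeff_add]
  congr 1
  ring

theorem krawtchouk_swap (j m t : ℕ) : krawtchouk j m t = (-1) ^ t * krawtchouk m j t := by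
  have hcomp : ((1 - X) ^ j * (1 + X) ^ m : ℤ[X]) =
      ((1 - X) ^ m * (1 + X) ^ j : ℤ[X]).comp (C (-1) * X) := by
    simp [sub_eq_add_neg, mul_comm]
  rw [krawtchouk, hcomp, comp_C_mul_X_coeff, mul_comm, krawtchouk]

theorem krawtchouk_reflect {j m a b : ℕ} (h : a + b = j + m) :
    krawtchouk j m a = (-1) ^ j * krawtchouk j m b := by
  have hsub : reflect 1 (1 - X : ℤ[X]) = -1 * (1 - X) := by
    simp [reflect_sub, reflect_one, reflect_one_X]
  have hadd : reflect 1 (1 + X : ℤ[X]) = 1 + X := by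
    simp [reflect_add, reflect_one, reflect_one_X, add_comm]
  have hdeg_sub : (1 - X : ℤ[X]).natDegree ≤ 1 := by compute_degree
  have hdeg_add : (1 + X : ℤ[X]).natDegree ≤ 1 := by compute_degree
  have hgen : reflect (j + m) ((1 - X) ^ j * (1 + X) ^ m : ℤ[X]) =
      C ((-1) ^ j) * ((1 - X) ^ j * (1 + X) ^ m) := by
    have hmul := reflect_mul _ _ (natDegree_pow_le_of_le j hdeg_sub)
      (natDegree_pow_le_of_le m hdeg_add)
    rw [reflect_pow hdeg_sub, reflect_pow hdeg_add, hsub, hadd, mul_pow] at hmul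
    simpa [mul_assoc] using hmul
  have hcoeff := congrArg (coeff · b) hgen
  simpa only [coeff_reflect, coeff_C_mul, revAt_le (show b ≤ j + m by omega),
    show j + m - b = a by omega, krawtchouk] using hcoeff

theorem krawtchouk_eq_zero_of_odd {j m t : ℕ} (hj : Odd j) (h : 2 * t = j + m) :
    krawtchouk j m t = 0 := by
  have hneg := krawtchouk_reflect (show t + t = j + m by omega)
  rw [hj.neg_one_pow] at hneg
  linarith

theorem add_one_mul_krawtchouk_one (n t : ℕ) :
    ((n : ℤ) + 1) * krawtchouk 1 n t = (n + 1 - 2 * t) * (n + 1).choose t := by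
  cases t with
  | zero => simp
  | succ t =>
    have hupper : ((n : ℤ) + 1) * n.choose (t + 1) = (n - t) * (n + 1).choose (t + 1) := by
      rcases le_or_gt t n with htn | htn
      · have hchoose := Nat.choose_mul_succ_eq n (t + 1)
        zify [show t + 1 ≤ n + 1 by omega] at hchoose
        linarith
      · simp [Nat.choose_eq_zero_of_lt (show n < t + 1 by omega),
          Nat.choose_eq_zero_of_lt (show n + 1 < t + 1 by omega)]
    have hlower : ((n : ℤ) + 1) * n.choose t = (n + 1).choose (t + 1) * (t + 1) :=
      mod_cast Nat.add_one_mul_choose_eq n t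
    rw [krawtchouk_succ_left, krawtchouk_zero_left, krawtchouk_zero_left, mul_sub, hupper, hlower]
    push_cast
    ring

theorem abs_krawtchouk_succ_left_le (j m t : ℕ) :
    |krawtchouk (j + 1) m (t + 1)| ≤ |krawtchouk j m (t + 1)| + |krawtchouk j m t| := by
  rw [krawtchouk_succ_left]
  exact abs_sub _ _

theorem abs_krawtchouk_succ_middle_le (j m t : ℕ) :
    |krawtchouk j (m + 1) (t + 1)| ≤ |krawtchouk j m (t + 1)| + |krawtchouk j m t| := by
  rw [krawtchouk_succ_middle]
  exact abs_add_le _ _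

/- The case `2 * t = n + 1` is only there to make the induction work: when `2 * (t + 1) = n + 1`,
the parameter to be lowered is chosen so as to leave `j` odd. -/
theorem abs_krawtchouk_le {n j m t : ℕ} (hn : j + m = n + 1) (hj : 0 < j) (hm : 0 < m)
    (ht : 2 * t < n + 1 ∨ 2 * t = n + 1 ∧ Odd j) :
    |krawtchouk j m t| ≤ krawtchouk 1 n t := by
  induction n generalizing j m t with
  | zero => omega
  | succ n ih =>
    rcases ht with ht | ⟨ht, hodd⟩
    · cases t with
      | zero => simp
      | succ t =>
        have of_predecessor {j' m' : ℕ} (hn' : j' + m' = n + 1) (hj' : 0 < j') (hm' : 0 < m')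
            (hodd : 2 * (t + 1) = n + 1 → Odd j')
            (hle : |krawtchouk j m (t + 1)| ≤
              |krawtchouk j' m' (t + 1)| + |krawtchouk j' m' t|) :
            |krawtchouk j m (t + 1)| ≤ krawtchouk 1 (n + 1) (t + 1) := by
          have hcases : 2 * (t + 1) < n + 1 ∨ 2 * (t + 1) = n + 1 ∧ Odd j' :=
            (show 2 * (t + 1) ≤ n + 1 by omega).lt_or_eq.imp_right fun h => ⟨h, hodd h⟩
          rw [krawtchouk_succ_middle]
          exact hle.trans (add_le_add (ih hn' hj' hm' hcases)
            (ih hn' hj' hm' (Or.inl (by omega))))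
        by_cases hjm : Odd j ∧ 1 < m
        · obtain ⟨m, rfl⟩ : ∃ m', m = m' + 1 := ⟨m - 1, by omega⟩
          exact of_predecessor (by omega) hj (by omega) (fun _ => hjm.1)
            (abs_krawtchouk_succ_middle_le j m t)
        · rw [Nat.odd_iff] at hjm
          obtain ⟨j, rfl⟩ : ∃ j', j = j' + 1 := ⟨j - 1, by omega⟩
          exact of_predecessor (by omega) (by omega) hm (fun h => Nat.odd_iff.mpr (by omega))
            (abs_krawtchouk_succ_left_le j m t)
    · rw [krawtchouk_eq_zero_of_odd hodd (by omega), abs_zero,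
        krawtchouk_eq_zero_of_odd odd_one (by omega)]

theorem krawtchouk_one_le {n j m k : ℕ} (hn : j + m = n + 1) (hk : Even k) (hkn : k ≤ n + 1)
    (hnk : n + 1 < 2 * k) : krawtchouk 1 n k ≤ krawtchouk j m k := by
  have hone : krawtchouk 1 n k ≤ 0 := by
    have hmul := add_one_mul_krawtchouk_one n k
    have hneg : ((n : ℤ) + 1 - 2 * k) * (n + 1).choose k ≤ 0 :=
      mul_nonpos_of_nonpos_of_nonneg (by omega) (by positivity)
    exact nonpos_of_mul_nonpos_right (hmul.trans_le hneg) (by positivity)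
  rcases j.eq_zero_or_pos with rfl | hj
  · exact hone.trans (by simp)
  rcases m.eq_zero_or_pos with rfl | hm
  · rw [krawtchouk_swap j, hk.neg_one_pow]
    exact hone.trans (by simp)
  have habs : |krawtchouk j m k| = |krawtchouk j m (n + 1 - k)| := by
    rw [krawtchouk_reflect (show k + (n + 1 - k) = j + m by omega), abs_mul, abs_neg_one_pow,
      one_mul]
  have hrefl : krawtchouk 1 n k = -krawtchouk 1 n (n + 1 - k) := by
    rw [krawtchouk_reflect (show k + (n + 1 - k) = 1 + n by omega), pow_one, neg_one_mul]
  calc krawtchouk 1 n k = -krawtchouk 1 n (n + 1 - k) := hrefl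
    _ ≤ -|krawtchouk j m (n + 1 - k)| :=
      neg_le_neg (abs_krawtchouk_le hn hj hm (Or.inl (by omega)))
    _ = -|krawtchouk j m k| := by rw [habs]
    _ ≤ krawtchouk j m k := neg_abs_le _

end Krawtchouk

section Walsh

variable {ι : Type*} [Fintype ι]

/-- The `±1` encoding of a bit. -/
def bitSign (b : Bool) : ℤ := bif b then -1 else 1

theorem bitSign_mul_bitSign (a b : Bool) :
    bitSign a * bitSign b = if a ≠ b then -1 else 1 := by
  cases a <;> cases b <;> simp [bitSign]

/-- The Walsh function of `J`, the character `x ↦ (-1) ^ (∑ i ∈ J, x i)` of `{0,1}^ι`. -/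
def walsh (J : Finset ι) (x : ι → Bool) : ℤ := ∏ i ∈ J, bitSign (x i)

theorem walsh_univ_mul_walsh_univ (x y : ι → Bool) :
    walsh Finset.univ x * walsh Finset.univ y = (-1) ^ hammingDist x y := by
  simp only [walsh, ← Finset.prod_mul_distrib, bitSign_mul_bitSign, Finset.prod_ite,
    Finset.prod_const, one_pow, mul_one, hammingDist]

theorem sum_walsh_mul_walsh (x y : ι → Bool) :
    ∑ J, walsh J x * walsh J y = if x = y then 2 ^ Fintype.card ι else 0 := by
  have hprod : ∑ J, walsh J x * walsh J y = ∏ i, (1 + bitSign (x i) * bitSign (y i)) := by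
    simp only [Finset.prod_one_add, Finset.powerset_univ, walsh, Finset.prod_mul_distrib]
  rw [hprod]
  split_ifs with hxy
  · simp [hxy, bitSign_mul_bitSign]
  · obtain ⟨i, hi⟩ := Function.ne_iff.mp hxy
    exact Finset.prod_eq_zero (Finset.mem_univ i) (by simp [bitSign_mul_bitSign, hi])

open Polynomial in
theorem sum_walsh_mul_X_pow_hammingDist (J : Finset ι) (x : ι → Bool) :
    ∑ y, C (walsh J y) * X ^ hammingDist x y =
      C (walsh J x) * ((1 - X) ^ J.card * (1 + X) ^ Jᶜ.card : ℤ[X]) := by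
  have hfactor (y : ι → Bool) : C (walsh J y) * X ^ hammingDist x y =
      ∏ i, (if i ∈ J then C (bitSign (y i)) else 1) * (if x i ≠ y i then (X : ℤ[X]) else 1) := by
    rw [Finset.prod_mul_distrib, Fintype.prod_ite_mem, Finset.prod_ite, walsh, map_prod,
      Finset.prod_const, Finset.prod_const_one, mul_one, hammingDist]
  calc ∑ y, C (walsh J y) * X ^ hammingDist x y
      = ∏ i, ∑ b : Bool, (if i ∈ J then C (bitSign b) else 1) *
          (if x i ≠ b then (X : ℤ[X]) else 1) := by
        simp only [hfactor, Finset.prod_univ_sum, Fintype.piFinset_univ]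
    _ = ∏ i, if i ∈ J then C (bitSign (x i)) * (1 - X : ℤ[X]) else 1 + X := by
        refine Finset.prod_congr rfl fun i _ => ?_
        cases x i <;> split_ifs <;> simp [bitSign] <;> ring
    _ = C (walsh J x) * ((1 - X) ^ J.card * (1 + X) ^ Jᶜ.card) := by
        simp [Finset.prod_ite, walsh, map_prod, Finset.prod_mul_distrib, mul_assoc,
          Finset.filter_not, ← Finset.compl_eq_univ_sdiff]

/-- The adjacency operator of the distance-`k` graph on `{0,1}^ι`. -/
noncomputable def sphereSum (k : ℕ) (f : (ι → Bool) → ℤ) (x : ι → Bool) : ℤ :=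
  ∑ y with hammingDist x y = k, f y

theorem sphereSum_walsh (k : ℕ) (J : Finset ι) (x : ι → Bool) :
    sphereSum k (walsh J) x = krawtchouk J.card Jᶜ.card k * walsh J x := by
  have hcoeff := congrArg (Polynomial.coeff · k) (sum_walsh_mul_X_pow_hammingDist J x)
  simp only [Polynomial.finsetSum_coeff, Polynomial.coeff_C_mul, Polynomial.coeff_X_pow, mul_ite,
    mul_one, mul_zero, eq_comm (a := k)] at hcoeff
  rw [sphereSum, Finset.sum_filter, hcoeff, mul_comm, krawtchouk]

theorem card_sphere (k : ℕ) (x : ι → Bool) :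
    (Finset.univ.filter fun y => hammingDist x y = k).card = (Fintype.card ι).choose k := by
  have hsum := sphereSum_walsh k ∅ x
  simp only [sphereSum, walsh, Finset.prod_empty, Finset.sum_const, Finset.card_empty,
    Finset.compl_empty, Finset.card_univ, krawtchouk_zero_left, nsmul_eq_mul, mul_one] at hsum
  exact_mod_cast hsum

/-- The unnormalized Walsh–Hadamard transform. -/
noncomputable def walshTransform (f : (ι → Bool) → ℤ) (J : Finset ι) : ℤ := ∑ x, f x * walsh J x

theorem sum_walshTransform_mul (f g : (ι → Bool) → ℤ) :
    ∑ J, walshTransform f J * walshTransform g J = 2 ^ Fintype.card ι * ∑ x, f x * g x := by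
  calc ∑ J, walshTransform f J * walshTransform g J
      = ∑ J, ∑ x, ∑ y, f x * g y * (walsh J x * walsh J y) := by
        simp only [walshTransform, Finset.sum_mul_sum, mul_mul_mul_comm]
    _ = ∑ x, ∑ y, f x * g y * ∑ J, walsh J x * walsh J y := by
        simp only [Finset.mul_sum]
        rw [Finset.sum_comm]
        exact Finset.sum_congr rfl fun x _ => Finset.sum_comm
    _ = 2 ^ Fintype.card ι * ∑ x, f x * g x := by
        simp [sum_walsh_mul_walsh, Finset.mul_sum, mul_comm]

theorem walshTransform_sphereSum (k : ℕ) (f : (ι → Bool) → ℤ) (J : Finset ι) :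
    walshTransform (sphereSum k f) J = krawtchouk J.card Jᶜ.card k * walshTransform f J := by
  calc walshTransform (sphereSum k f) J = ∑ y, f y * sphereSum k (walsh J) y := by
        simp only [walshTransform, sphereSum, Finset.sum_filter, Finset.sum_mul, Finset.mul_sum,
          ite_mul, zero_mul, mul_ite, mul_zero]
        rw [Finset.sum_comm]
        simp only [hammingDist_comm]
    _ = krawtchouk J.card Jᶜ.card k * walshTransform f J := by
        simp only [sphereSum_walsh, walshTransform, Finset.mul_sum, mul_left_comm]

theorem mul_sum_sq_le_sum_mul_sphereSum {k : ℕ} {c : ℤ}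
    (hc : ∀ J : Finset ι, c ≤ krawtchouk J.card Jᶜ.card k) (f : (ι → Bool) → ℤ) :
    c * ∑ x, f x * f x ≤ ∑ x, f x * sphereSum k f x := by
  have hpow : (0 : ℤ) < 2 ^ Fintype.card ι := by positivity
  refine le_of_mul_le_mul_left ?_ hpow
  calc 2 ^ Fintype.card ι * (c * ∑ x, f x * f x)
      = ∑ J, c * (walshTransform f J * walshTransform f J) := by
        rw [← Finset.mul_sum, sum_walshTransform_mul, mul_left_comm]
    _ ≤ ∑ J, krawtchouk J.card Jᶜ.card k * (walshTransform f J * walshTransform f J) :=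
        Finset.sum_le_sum fun J _ => mul_le_mul_of_nonneg_right (hc J) (mul_self_nonneg _)
    _ = ∑ J, walshTransform f J * walshTransform (sphereSum k f) J := by
        simp only [walshTransform_sphereSum, mul_left_comm]
    _ = 2 ^ Fintype.card ι * ∑ x, f x * sphereSum k f x := sum_walshTransform_mul f _

end Walsh

section DistancePairs

/-- The ordered pairs of words of `{0,1}^ι` at Hamming distance exactly `k`. -/
noncomputable def distPairs (ι : Type*) [Fintype ι] (k : ℕ) :
    Finset ((ι → Bool) × (ι → Bool)) :=
  Finset.univ.filter fun p => hammingDist p.1 p.2 = k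

variable {ι : Type*} [Fintype ι]

@[simp]
theorem mem_distPairs {k : ℕ} {p : (ι → Bool) × (ι → Bool)} :
    p ∈ distPairs ι k ↔ hammingDist p.1 p.2 = k := by
  simp [distPairs]

theorem sum_distPairs {M : Type*} [AddCommMonoid M] (k : ℕ)
    (F : (ι → Bool) × (ι → Bool) → M) :
    ∑ p ∈ distPairs ι k, F p = ∑ x, ∑ y with hammingDist x y = k, F (x, y) := by
  simp only [distPairs, Finset.sum_filter, Fintype.sum_prod_type]

theorem card_distPairs (k : ℕ) :
    (distPairs ι k).card = 2 ^ Fintype.card ι * (Fintype.card ι).choose k := by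
  rw [Finset.card_eq_sum_ones, sum_distPairs]
  simp [card_sphere]

theorem card_mul_card_cut_distPairs_le {k : ℕ} (hk : Even k) (hkι : k ≤ Fintype.card ι)
    (hιk : Fintype.card ι < 2 * k) (g : (ι → Bool) → Bool) :
    Fintype.card ι * ((distPairs ι k).filter fun p => g p.1 ≠ g p.2).card ≤
      k * (distPairs ι k).card := by
  obtain ⟨n, hn⟩ : ∃ n, Fintype.card ι = n + 1 := ⟨Fintype.card ι - 1, by omega⟩
  have hspectral := mul_sum_sq_le_sum_mul_sphereSum (c := krawtchouk 1 n k)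
    (fun J : Finset ι => krawtchouk_one_le (J.card_add_card_compl.trans hn) hk (by omega)
      (by omega)) (fun x => bitSign (g x))
  have hcut : ∑ x, bitSign (g x) * sphereSum k (fun y => bitSign (g y)) x =
      (distPairs ι k).card - 2 * ((distPairs ι k).filter fun p => g p.1 ≠ g p.2).card := by
    simp only [sphereSum, Finset.mul_sum]
    rw [← sum_distPairs k fun p => bitSign (g p.1) * bitSign (g p.2)]
    simp only [bitSign_mul_bitSign]
    rw [Finset.card_eq_sum_ones, Finset.card_filter, Nat.cast_sum, Nat.cast_sum, Finset.mul_sum,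
      ← Finset.sum_sub_distrib]
    refine Finset.sum_congr rfl fun p _ => ?_
    split_ifs <;> simp
  have hone : ((n : ℤ) + 1) * (krawtchouk 1 n k * 2 ^ Fintype.card ι) =
      (n + 1 - 2 * k) * (distPairs ι k).card := by
    rw [← mul_assoc, add_one_mul_krawtchouk_one, card_distPairs, hn]
    push_cast
    ring
  simp only [bitSign_mul_bitSign, ne_eq, not_true_eq_false, if_false, Finset.sum_const,
    Finset.card_univ, Fintype.card_fun, Fintype.card_bool, nsmul_eq_mul, mul_one] at hspectral
  rw [hcut] at hspectral
  push_cast at hspectral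
  have hscaled := mul_le_mul_of_nonneg_left hspectral (show (0 : ℤ) ≤ n + 1 by positivity)
  rw [hone] at hscaled
  rw [hn]
  zify
  linarith

theorem card_mul_le_of_code {κ : Type*} [Fintype κ] {k M : ℕ} (hk : Even k)
    (hkι : k ≤ Fintype.card ι) (hιk : Fintype.card ι < 2 * k) (c : (ι → Bool) → κ → Bool)
    (hc : ∀ x y, hammingDist x y = k → M ≤ hammingDist (c x) (c y)) :
    Fintype.card ι * M ≤ Fintype.card κ * k := by
  have hpos : 0 < (distPairs ι k).card := by
    rw [card_distPairs]
    exact Nat.mul_pos (by positivity) (Nat.choose_pos hkι)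
  refine Nat.le_of_mul_le_mul_right ?_ hpos
  calc Fintype.card ι * M * (distPairs ι k).card
      = Fintype.card ι * ∑ _p ∈ distPairs ι k, M := by
        rw [Finset.sum_const, smul_eq_mul, mul_assoc, mul_comm M]
    _ ≤ Fintype.card ι * ∑ p ∈ distPairs ι k, hammingDist (c p.1) (c p.2) := by
        gcongr with p hp
        exact hc _ _ (mem_distPairs.mp hp)
    _ = ∑ i, Fintype.card ι * ((distPairs ι k).filter fun p => c p.1 i ≠ c p.2 i).card := by
        rw [← Finset.mul_sum]
        simp only [hammingDist, Finset.card_filter]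
        rw [Finset.sum_comm]
    _ ≤ ∑ _i : κ, k * (distPairs ι k).card :=
        Finset.sum_le_sum fun i _ => card_mul_card_cut_distPairs_le hk hkι hιk fun x => c x i
    _ = Fintype.card κ * k * (distPairs ι k).card := by
        rw [Finset.sum_const, Finset.card_univ, smul_eq_mul, mul_assoc]

end DistancePairs

section Covers

theorem mk_mem_cut_iff {V : Type*} {G : SimpleGraph V} {W : Set V} {a b : V} (hab : G.Adj a b) :
    s(a, b) ∈ {e | e ∈ G.edgeSet ∧ ∃ u v, e = s(u, v) ∧ u ∈ W ∧ v ∉ W} ↔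
      ¬(a ∈ W ↔ b ∈ W) := by
  simp only [Set.mem_ofPred_eq, SimpleGraph.mem_edgeSet, hab, true_and, Sym2.eq_iff]
  constructor
  · rintro ⟨u, v, ⟨rfl, rfl⟩ | ⟨rfl, rfl⟩, hu, hv⟩ <;> tauto
  · intro h
    by_cases ha : a ∈ W
    · exact ⟨a, b, Or.inl ⟨rfl, rfl⟩, ha, by tauto⟩
    · exact ⟨b, a, Or.inr ⟨rfl, rfl⟩, by tauto, ha⟩

theorem hasCover_iff_exists_code {V : Type*} {G : SimpleGraph V} {n k : ℕ} :
    HasCover G n k ↔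
      ∃ c : V → Fin n → Bool, ∀ a b, G.Adj a b → k ≤ hammingDist (c a) (c b) := by
  constructor
  · rintro ⟨X, hX, hcover⟩
    choose W hW using hX
    refine ⟨fun v i => decide (v ∈ W i), fun a b hab => (hcover s(a, b) hab).trans_eq ?_⟩
    simp only [hW, mk_mem_cut_iff hab, hammingDist, ne_eq, decide_eq_decide]
  · rintro ⟨c, hc⟩
    refine ⟨_, fun i => ⟨{v | c v i = true}, rfl⟩, Sym2.ind fun a b hab => ?_⟩
    refine (hc a b hab).trans_eq ?_
    simp only [mk_mem_cut_iff hab]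
    simp only [Set.mem_ofPred_eq, Bool.coe_iff_coe, hammingDist, ne_eq]

theorem HasCover.of_hom {V W : Type*} {G : SimpleGraph V} {H : SimpleGraph W} (f : G →g H)
    {n k : ℕ} (h : HasCover H n k) : HasCover G n k := by
  obtain ⟨c, hc⟩ := hasCover_iff_exists_code.mp h
  exact hasCover_iff_exists_code.mpr ⟨c ∘ f, fun a b hab => hc _ _ (f.map_adj hab)⟩

theorem cutCover_eq_of_hom {V W : Type*} {G : SimpleGraph V} {H : SimpleGraph W} (f : G →g H)
    (g : H →g G) : cutCover G = cutCover H := by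
  have hcover (n k : ℕ) : HasCover G n k ↔ HasCover H n k := ⟨.of_hom g, .of_hom f⟩
  simp only [cutCover, hcover]

theorem cubeGraph_adj {n k : ℕ} (hk : 0 < k) {x y : Fin n → Bool} :
    (cubeGraph n k).Adj x y ↔ k ≤ hammingDist x y := by
  rw [cubeGraph, SimpleGraph.fromRel_adj, hammingDist_comm y x, or_self, and_iff_right_iff_imp]
  exact fun h => hammingDist_pos.mp (hk.trans_le h)

theorem hammingDist_cons {n : ℕ} {α : Fin (n + 1) → Type*} [∀ i, DecidableEq (α i)] (a b : α 0)
    (x y : ∀ i : Fin n, α i.succ) :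
    hammingDist (Fin.cons a x : ∀ i, α i) (Fin.cons b y) =
      (if a ≠ b then 1 else 0) + hammingDist x y := by
  simp only [hammingDist, Finset.card_filter, Fin.sum_univ_succ, Fin.cons_zero, Fin.cons_succ]

theorem hammingDist_le_hammingDist_tail_add_one {n : ℕ} {α : Fin (n + 1) → Type*}
    [∀ i, DecidableEq (α i)] (x y : ∀ i, α i) :
    hammingDist x y ≤ hammingDist (Fin.tail x) (Fin.tail y) + 1 := by
  rw [← Fin.cons_self_tail x, ← Fin.cons_self_tail y, hammingDist_cons, Fin.tail_cons,
    Fin.tail_cons]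
  split_ifs <;> omega

/-- Adding a parity bit to the words of `Q_{n/k}`, for odd `k`. The Walsh function of the full set
is the parity in multiplicative form, and the added bit records whether it is `1`. -/
def cubeGraphParityHom (n : ℕ) {k : ℕ} (hk : Odd k) :
    cubeGraph n k →g cubeGraph (n + 1) (k + 1) where
  toFun x := Fin.cons (decide (walsh Finset.univ x = 1)) x
  map_rel' {x y} hxy := by
    rw [cubeGraph_adj hk.pos] at hxy
    rw [cubeGraph_adj k.succ_pos, hammingDist_cons]
    rcases hxy.eq_or_lt with hdist | hdist
    · have hprod : walsh Finset.univ x * walsh Finset.univ y = -1 := by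
        rw [walsh_univ_mul_walsh_univ, ← hdist, hk.neg_one_pow]
      have hparity : decide (walsh Finset.univ x = 1) ≠ decide (walsh Finset.univ y = 1) := by
        rcases Int.mul_eq_neg_one_iff_eq_one_or_neg_one.mp hprod with ⟨hx, hy⟩ | ⟨hx, hy⟩ <;>
          simp [hx, hy]
      rw [if_pos hparity]
      omega
    · omega

/-- Deleting the first bit of the words of `Q_{(n+1)/(k+1)}`. -/
def cubeGraphTailHom (n : ℕ) {k : ℕ} (hk : 0 < k) :
    cubeGraph (n + 1) (k + 1) →g cubeGraph n k where
  toFun := Fin.tail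
  map_rel' {x y} hxy := by
    rw [cubeGraph_adj k.succ_pos] at hxy
    rw [cubeGraph_adj hk]
    have := hammingDist_le_hammingDist_tail_add_one x y
    omega

theorem cutCover_cubeGraph_succ_succ (n : ℕ) {k : ℕ} (hk : Odd k) :
    cutCover (cubeGraph n k) = cutCover (cubeGraph (n + 1) (k + 1)) :=
  cutCover_eq_of_hom (cubeGraphParityHom n hk) (cubeGraphTailHom n hk.pos)

theorem hasCover_cubeGraph_self (n : ℕ) {k : ℕ} (hk : 0 < k) : HasCover (cubeGraph n k) n k :=
  hasCover_iff_exists_code.mpr ⟨id, fun _ _ => (cubeGraph_adj hk).mp⟩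

theorem mul_le_of_hasCover_cubeGraph {n k N M : ℕ} (hk : Even k) (hkn : k ≤ n) (hnk : n < 2 * k)
    (h : HasCover (cubeGraph n k) N M) : n * M ≤ N * k := by
  obtain ⟨c, hc⟩ := hasCover_iff_exists_code.mp h
  simpa using card_mul_le_of_code hk (by simpa) (by simpa) c
    fun x y hxy => hc x y ((cubeGraph_adj (by omega)).mpr hxy.ge)

theorem cutCover_cubeGraph_of_even {n k : ℕ} (hk : Even k) (hkn : k ≤ n) (hnk : n < 2 * k) :
    cutCover (cubeGraph n k) = (n : ℝ) / k := by
  have hk0 : 0 < k := by omega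
  refine IsLeast.csInf_eq ⟨⟨n, k, hk0, rfl, hasCover_cubeGraph_self n hk0⟩, ?_⟩
  rintro q ⟨N, M, hM, rfl, hcover⟩
  rw [div_le_div_iff₀ (by positivity) (by positivity)]
  exact_mod_cast mul_le_of_hasCover_cubeGraph hk hkn hnk hcover

end Covers

/-- For `k ≤ n < 2k`: `x(Q_{n/k}) = n/k` if `k` is even, `(n+1)/(k+1)` if `k` is odd. -/
theorem cutCover_cube_eq (n k : ℕ) (hkn : k ≤ n) (hn : n < 2 * k) :
    (Even k → cutCover (cubeGraph n k) = (n : ℝ) / k) ∧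
    (Odd k → cutCover (cubeGraph n k) = ((n : ℝ) + 1) / ((k : ℝ) + 1)) := by
  refine ⟨fun hk => cutCover_cubeGraph_of_even hk hkn hn, fun hk => ?_⟩
  rw [cutCover_cubeGraph_succ_succ n hk,
    cutCover_cubeGraph_of_even hk.add_one (by omega) (by omega)]
  push_cast
  rfl
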